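/- Let A = (F, FK)Π ∈ ℝ^{d×m}, where F ∈ ℝ^{d×r} has rank r, K ∈ ℝ^{r×ℓ} (ℓ = m − r) is nonnegative with columns k_1, …, k_ℓ of unit 1-norm, and Π is an m×m permutation matrix. Let N ∈ ℝ^{d×m}, Ã = A + N, let Ã^r be a best rank-r approximation of Ã in the spectral norm, set N̄ = N − (Ã − Ã^r), write N̄Π⁻¹ = (N̄⁽¹⁾, N̄⁽²⁾) with N̄⁽¹⁾ ∈ ℝ^{d×r}, and set F̂ = F + N̄⁽¹⁾, N̂ = −N̄⁽¹⁾K + N̄⁽²⁾, and B̂ = F̂K + N̂. Let σ = σ_min(F) and μ = max_i ‖k_i‖_2. If ‖N‖_2 < σ(1 − μ)/4, then for every column b̂_i of B̂ there exists a vector k̂_i ∈ ℝ^r with ‖k̂_i‖_2 < 1 such that b̂_i = F̂ k̂_i. -/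

import Mathlib

open Matrix

noncomputable def euclNorm {n : ℕ} (v : Fin n → ℝ) : ℝ := Real.sqrt (∑ i, v i ^ 2)

noncomputable def oneNorm {n : ℕ} (v : Fin n → ℝ) : ℝ := ∑ i, |v i|

noncomputable def specNorm {d m : ℕ} (M : Matrix (Fin d) (Fin m) ℝ) : ℝ :=
  ‖LinearMap.toContinuousLinearMap (Matrix.toEuclideanLin M)‖

noncomputable def sigmaMin {d r : ℕ} (M : Matrix (Fin d) (Fin r) ℝ) : ℝ :=
  sInf ((fun x => euclNorm (M *ᵥ x)) '' {x : Fin r → ℝ | euclNorm x = 1})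



theorem aux_eucl_eq {n : ℕ} (v : Fin n → ℝ) : euclNorm v = ‖WithLp.toLp 2 v‖ := by
  simp [euclNorm, EuclideanSpace.norm_eq]

theorem aux_eucl_nonneg {n : ℕ} (v : Fin n → ℝ) : 0 ≤ euclNorm v := Real.sqrt_nonneg _

theorem aux_eucl_sub {n : ℕ} (v w : Fin n → ℝ) : euclNorm (v - w) ≤ euclNorm v + euclNorm w := by
  simp only [aux_eucl_eq, WithLp.toLp_sub]
  exact norm_sub_le _ _

theorem aux_eucl_tri {n : ℕ} (v w : Fin n → ℝ) : euclNorm v - euclNorm w ≤ euclNorm (v - w) := by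
  simp only [aux_eucl_eq, WithLp.toLp_sub]
  exact norm_sub_norm_le _ _

theorem aux_eucl_smul {n : ℕ} (c : ℝ) (v : Fin n → ℝ) : euclNorm (c • v) = |c| * euclNorm v := by
  simp only [aux_eucl_eq, WithLp.toLp_smul, norm_smul, Real.norm_eq_abs]

theorem aux_eucl_zero {n : ℕ} (v : Fin n → ℝ) (h : euclNorm v = 0) : v = 0 := by
  rw [aux_eucl_eq, norm_eq_zero] at h
  simpa using h

theorem aux_spec {d m : ℕ} (M : Matrix (Fin d) (Fin m) ℝ) (x : Fin m → ℝ) :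
    euclNorm (M *ᵥ x) ≤ specNorm M * euclNorm x := by
  have := (LinearMap.toContinuousLinearMap (Matrix.toEuclideanLin M)).le_opNorm (WithLp.toLp 2 x)
  simpa [aux_eucl_eq, specNorm, Matrix.toLpLin_apply] using this

theorem aux_spec_nonneg {d m : ℕ} (M : Matrix (Fin d) (Fin m) ℝ) : 0 ≤ specNorm M :=
  norm_nonneg _

theorem aux_spec_sub {d m : ℕ} (M N : Matrix (Fin d) (Fin m) ℝ) :
    specNorm (M - N) ≤ specNorm M + specNorm N := by
  simp only [specNorm, map_sub]
  exact norm_sub_le _ _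

theorem aux_sigma_nonneg {d r : ℕ} (M : Matrix (Fin d) (Fin r) ℝ) : 0 ≤ sigmaMin M := by
  apply Real.sInf_nonneg
  rintro _ ⟨x, -, rfl⟩
  exact aux_eucl_nonneg _

theorem aux_sigma {d r : ℕ} (M : Matrix (Fin d) (Fin r) ℝ) (x : Fin r → ℝ) :
    sigmaMin M * euclNorm x ≤ euclNorm (M *ᵥ x) := by
  by_cases h : euclNorm x = 0
  · rw [h, mul_zero]; exact aux_eucl_nonneg _
  have hp : 0 < euclNorm x := lt_of_le_of_ne (aux_eucl_nonneg x) (Ne.symm h)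
  have h1 : sigmaMin M ≤ euclNorm (M *ᵥ ((euclNorm x)⁻¹ • x)) := by
    apply csInf_le
    · refine ⟨0, ?_⟩
      rintro _ ⟨x, -, rfl⟩
      exact aux_eucl_nonneg _
    · refine ⟨_, ?_, rfl⟩
      simp only [Set.mem_setOf_eq]
      rw [aux_eucl_smul, abs_of_pos (inv_pos.2 hp), inv_mul_cancel₀ h]
  rw [Matrix.mulVec_smul, aux_eucl_smul, abs_of_pos (inv_pos.2 hp)] at h1
  calc sigmaMin M * euclNorm x ≤ ((euclNorm x)⁻¹ * euclNorm (M *ᵥ x)) * euclNorm x := by gcongr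
    _ = _ := by field_simp

theorem aux_ext {d m r ℓ : ℕ} (π : Fin m ≃ (Fin r ⊕ Fin ℓ)) (M : Matrix (Fin d) (Fin m) ℝ)
    (x : Fin r → ℝ) (y : Fin ℓ → ℝ) (c : Fin d) :
    (M *ᵥ (fun j => Sum.elim x y (π j))) c =
      ∑ a, M c (π.symm (Sum.inl a)) * x a + ∑ b, M c (π.symm (Sum.inr b)) * y b := by
  simp only [Matrix.mulVec, dotProduct]
  rw [← π.symm.sum_comp]
  simp [Fintype.sum_sum_type]

theorem aux_ext_norm {m r ℓ : ℕ} (π : Fin m ≃ (Fin r ⊕ Fin ℓ))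
    (x : Fin r → ℝ) :
    euclNorm (fun j => Sum.elim x (0 : Fin ℓ → ℝ) (π j)) = euclNorm x := by
  unfold euclNorm
  rw [← π.symm.sum_comp]
  simp [Fintype.sum_sum_type]

theorem aux_single {m : ℕ} (j : Fin m) : euclNorm (Pi.single j (1 : ℝ)) = 1 := by
  simp [euclNorm, Pi.single_apply]

/-- Lemma 3-b of the paper — if `‖N‖₂ < σ(1 − μ)/4` then every column
`b̂_i` of `B̂ = F̂K + N̂` can be written `b̂_i = F̂ k̂_i` with `‖k̂_i‖₂ < 1`. -/
theorem stmt9 (d m r ℓ : ℕ)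
    (F : Matrix (Fin d) (Fin r) ℝ) (hF : F.rank = r)
    (K : Matrix (Fin r) (Fin ℓ) ℝ) (hKpos : ∀ a i, 0 ≤ K a i)
    (hK1 : ∀ i : Fin ℓ, oneNorm (fun a => K a i) = 1)
    (π : Fin m ≃ (Fin r ⊕ Fin ℓ))
    (A : Matrix (Fin d) (Fin m) ℝ)
    (hA : ∀ i j, A i j = Sum.elim (fun a => F i a) (fun b => (F * K) i b) (π j))
    (N : Matrix (Fin d) (Fin m) ℝ)
    (Ar : Matrix (Fin d) (Fin m) ℝ) (hAr_rank : Ar.rank ≤ r)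
    (hAr_best : ∀ B : Matrix (Fin d) (Fin m) ℝ, B.rank ≤ r →
      specNorm (A + N - Ar) ≤ specNorm (A + N - B))
    (Nbar : Matrix (Fin d) (Fin m) ℝ) (hNbar : Nbar = N - (A + N - Ar))
    (N1 : Matrix (Fin d) (Fin r) ℝ) (hN1 : ∀ i a, N1 i a = Nbar i (π.symm (Sum.inl a)))
    (N2 : Matrix (Fin d) (Fin ℓ) ℝ) (hN2 : ∀ i b, N2 i b = Nbar i (π.symm (Sum.inr b)))
    (Nhat : Matrix (Fin d) (Fin ℓ) ℝ) (hNhat : Nhat = -(N1 * K) + N2)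
    (Fhat : Matrix (Fin d) (Fin r) ℝ) (hFhat : Fhat = F + N1)
    (Bhat : Matrix (Fin d) (Fin ℓ) ℝ) (hBhat : Bhat = Fhat * K + Nhat)
    (σ μ : ℝ) (hσ : σ = sigmaMin F) (hμ : μ = ⨆ i : Fin ℓ, euclNorm (fun a => K a i))
    (hN : specNorm N < σ * (1 - μ) / 4) :
    ∀ i : Fin ℓ, ∃ khat : Fin r → ℝ, euclNorm khat < 1 ∧
      (fun c => Bhat c i) = Fhat *ᵥ khat := by
  intro i
  set ε := specNorm N with hε
  have hε0 : 0 ≤ ε := aux_spec_nonneg N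
  have hσ0 : 0 ≤ σ := hσ ▸ aux_sigma_nonneg F
  have hki : euclNorm (fun a => K a i) ≤ μ := by
    rw [hμ]
    exact le_ciSup (f := fun i : Fin ℓ => euclNorm (fun a => K a i)) (Set.finite_range _).bddAbove i
  have hμ0 : 0 ≤ μ := (aux_eucl_nonneg _).trans hki
  have hσpos : 0 < σ := by
    rcases hσ0.lt_or_eq with h | h
    · exact h
    · rw [← h] at hN; linarith
  -- rank of A and the bound on Nbar
  have hArank : A.rank ≤ r := by
    have : A = F * (Matrix.of fun a j =>
        Sum.elim (fun b => (1 : Matrix (Fin r) (Fin r) ℝ) a b) (fun b => K a b) (π j)) := by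
      ext c j
      rw [hA, Matrix.mul_apply]
      rcases hj : π j with a | b
      · simp [Matrix.one_apply, hj]
      · simp [Matrix.mul_apply, hj]
    rw [this]
    exact (Matrix.rank_mul_le_left _ _).trans hF.le
  have hNb : specNorm Nbar ≤ 2 * ε := by
    have h1 := hAr_best A hArank
    rw [add_sub_cancel_left] at h1
    have h2 := aux_spec_sub N (A + N - Ar)
    rw [← hNbar] at h2
    linarith
  have hArN : Ar = A + Nbar := by rw [hNbar]; abel
  have hFA : ∀ c a, Fhat c a = Ar c (π.symm (Sum.inl a)) := by
    intro c a
    simp [hFhat, hArN, hA, hN1]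
  have hBA : ∀ c b, Bhat c b = Ar c (π.symm (Sum.inr b)) := by
    intro c b
    rw [hBhat, hNhat, hFhat, Matrix.add_mul, hArN]
    simp [hA, hN2]
  have hN1x : ∀ x, euclNorm (N1 *ᵥ x) ≤ 2 * ε * euclNorm x := by
    intro x
    have h : N1 *ᵥ x = Nbar *ᵥ (fun j => Sum.elim x (0 : Fin ℓ → ℝ) (π j)) := by
      ext c
      rw [aux_ext]
      simp [Matrix.mulVec, dotProduct, hN1]
    rw [h]
    refine (aux_spec _ _).trans ?_
    rw [aux_ext_norm]
    exact mul_le_mul_of_nonneg_right hNb (aux_eucl_nonneg _)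
  have hn2 : euclNorm (fun c => N2 c i) ≤ 2 * ε := by
    have h : (fun c => N2 c i) = Nbar *ᵥ (Pi.single (π.symm (Sum.inr i)) 1) := by
      ext c
      simp [hN2]
    rw [h]
    refine (aux_spec _ _).trans ?_
    rw [aux_single, mul_one]
    exact hNb
  have hFx : ∀ x, σ * euclNorm x ≤ euclNorm (F *ᵥ x) := fun x => hσ ▸ aux_sigma F x
  -- Fhat is injective
  have hinj : Function.Injective Fhat.mulVecLin := by
    rw [← LinearMap.ker_eq_bot, LinearMap.ker_eq_bot']
    intro x hx
    rw [Matrix.mulVecLin_apply, hFhat, Matrix.add_mulVec] at hx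
    apply aux_eucl_zero
    have h1 := hFx x
    have h2 := hN1x x
    have h3 : euclNorm (F *ᵥ x) = euclNorm (N1 *ᵥ x) := by
      rw [eq_neg_of_add_eq_zero_left hx]
      simp [euclNorm]
    have h4 := aux_eucl_nonneg x
    by_contra hne
    have h5 : 0 < euclNorm x := lt_of_le_of_ne h4 (Ne.symm hne)
    have h6 : σ ≤ 2 * ε := le_of_mul_le_mul_right (by linarith) h5
    nlinarith
  have hrange : LinearMap.range Fhat.mulVecLin = LinearMap.range Ar.mulVecLin := by
    apply Submodule.eq_of_le_of_finrank_le
    · rintro _ ⟨x, rfl⟩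
      refine ⟨fun j => Sum.elim x (0 : Fin ℓ → ℝ) (π j), ?_⟩
      ext c
      rw [Matrix.mulVecLin_apply, Matrix.mulVecLin_apply, aux_ext]
      simp [Matrix.mulVec, dotProduct, hFA]
    · rw [LinearMap.finrank_range_of_inj hinj]
      simpa [Matrix.rank] using hAr_rank
  have hmem : (fun c => Bhat c i) ∈ LinearMap.range Fhat.mulVecLin := by
    rw [hrange]
    refine ⟨Pi.single (π.symm (Sum.inr i)) 1, ?_⟩
    ext c
    simp [hBA]
  obtain ⟨k, hk⟩ := hmem
  rw [Matrix.mulVecLin_apply] at hk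
  refine ⟨k, ?_, hk.symm⟩
  have key : F *ᵥ (k - fun a => K a i) = (fun c => N2 c i) - N1 *ᵥ k := by
    have hb : (fun c => Bhat c i) = F *ᵥ (fun a => K a i) + (fun c => N2 c i) := by
      ext c
      rw [hBhat, hNhat, hFhat, Matrix.add_mul]
      simp [Matrix.mulVec, dotProduct, Matrix.mul_apply]
    rw [hb, hFhat, Matrix.add_mulVec] at hk
    rw [Matrix.mulVec_sub, sub_eq_sub_iff_add_eq_add, hk, add_comm]
  have h1 := hFx (k - fun a => K a i)
  rw [key] at h1
  have h2 := aux_eucl_sub (fun c => N2 c i) (N1 *ᵥ k)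
  have h3 := hN1x k
  have h4 : σ * (euclNorm k - μ) ≤ σ * euclNorm (k - fun a => K a i) :=
    mul_le_mul_of_nonneg_left (by linarith [aux_eucl_tri k (fun a => K a i)]) hσ0
  have h5 : σ * (euclNorm k - μ) ≤ 2 * ε + 2 * ε * euclNorm k := by linarith
  by_contra hge
  push Not at hge
  have h6 : 0 ≤ σ * μ := mul_nonneg hσ0 hμ0
  have h7 : 0 ≤ (σ - 2 * ε) * (euclNorm k - 1) :=
    mul_nonneg (by linarith) (by linarith)
  linarith
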